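/- Let n ≥ 2, let M be a closed connected topological n-manifold, and let f : M → M be a regular homeomorphism such that no point of its chain recurrent set has Morse index 1 or n−1. Then M is simply connected. -/

import Mathlib

open Filter Topology

/-- `M` is a topological `n`-manifold without boundary: every point has an open
neighbourhood homeomorphic to `ℝⁿ`. -/
def IsChartedEuclidean (n : ℕ) (M : Type*) [TopologicalSpace M] : Prop :=
  ∀ x : M, ∃ U : Set M, IsOpen U ∧ x ∈ U ∧ Nonempty (U ≃ₜ EuclideanSpace ℝ (Fin n))

/-- An `ε`-chain of the map `f` from `x` to `y`. -/
def IsEpsChain {M : Type*} [PseudoMetricSpace M] (f : M → M) (ε : ℝ) (x y : M) : Prop :=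
  ∃ k : ℕ, 0 < k ∧ ∃ (c : Fin (k + 1) → M) (m : Fin k → ℕ),
    c 0 = x ∧ c (Fin.last k) = y ∧ (∀ i, 1 ≤ m i) ∧
    ∀ i : Fin k, dist (f^[m i] (c i.castSucc)) (c i.succ) < ε

/-- A point is chain recurrent for `f` if for every `ε > 0` there is an `ε`-chain
from the point to itself. -/
def ChainRecurrent {M : Type*} [PseudoMetricSpace M] (f : M → M) (x : M) : Prop :=
  ∀ ε : ℝ, 0 < ε → IsEpsChain f ε x x

/-- The chain recurrent set of `f`. -/
def chainRecurrentSet {M : Type*} [PseudoMetricSpace M] (f : M → M) : Set M :=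
  {x | ChainRecurrent f x}

/-- The canonical hyperbolic model map `a_{i,δu,δs} : ℝⁿ → ℝⁿ`,
`a(x₁,…,xₙ) = (2δu·x₁, 2x₂, …, 2x_i, (δs/2)·x_{i+1}, x_{i+2}/2, …, xₙ/2)`. -/
noncomputable def modelMap (n i : ℕ) (δu δs : ℝ) :
    EuclideanSpace ℝ (Fin n) → EuclideanSpace ℝ (Fin n) :=
  fun x => WithLp.toLp 2 fun j =>
    if (j : ℕ) < i then (if (j : ℕ) = 0 then 2 * δu else 2) * x j
    else (if (j : ℕ) = i then δs / 2 else 1 / 2) * x j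

/-- A point `p` is a topologically hyperbolic periodic point of the homeomorphism `f`
with Morse index `i`: `p` is periodic of some least period `m` and `f^m` is conjugate,
in a neighbourhood of `p`, to the model map `a_{i,δu,δs}` on `ℝⁿ`. -/
def TopHyperbolic {M : Type*} [MetricSpace M] (n : ℕ) (f : M ≃ₜ M) (p : M) (i : ℕ) : Prop :=
  ∃ m : ℕ, 0 < m ∧ Function.IsPeriodicPt (⇑f) m p ∧ Function.minimalPeriod (⇑f) p = m ∧
    ∃ δu δs : ℝ, (δu = 1 ∨ δu = -1) ∧ (δs = 1 ∨ δs = -1) ∧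
      ∃ (U : Set M) (_ : IsOpen U) (_ : p ∈ U) (h : U ≃ₜ EuclideanSpace ℝ (Fin n)),
        ∀ x : U, (⇑f)^[m] (x : M) = ((h.symm (modelMap n i δu δs (h x)) : U) : M)

/-- A homeomorphism is regular if its chain recurrent set is finite and consists of
topologically hyperbolic periodic points (of some Morse index `i ∈ {0,…,n}`). -/
def RegularHomeo {M : Type*} [MetricSpace M] (n : ℕ) (f : M ≃ₜ M) : Prop :=
  (chainRecurrentSet (⇑f)).Finite ∧
    ∀ p ∈ chainRecurrentSet (⇑f), ∃ i ≤ n, TopHyperbolic n f p i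

/-- The stable manifold `W^s_p = {q : f^{km}(q) → p, k → +∞}`, `m` the least period. -/
def stableSet {M : Type*} [MetricSpace M] (f : M ≃ₜ M) (p : M) : Set M :=
  {q | Tendsto (fun k : ℕ => (⇑f)^[k * Function.minimalPeriod (⇑f) p] q) atTop (𝓝 p)}

/-- The unstable manifold `W^u_p = {q : f^{-km}(q) → p, k → +∞}`, `m` the least period. -/
def unstableSet {M : Type*} [MetricSpace M] (f : M ≃ₜ M) (p : M) : Set M :=
  {q | Tendsto (fun k : ℕ => (⇑f.symm)^[k * Function.minimalPeriod (⇑f) p] q) atTop (𝓝 p)}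

/-- A saddle periodic point: topologically hyperbolic of Morse index `0 < i < n`. -/
def IsSaddlePt {M : Type*} [MetricSpace M] (n : ℕ) (f : M ≃ₜ M) (p : M) : Prop :=
  ∃ i, 0 < i ∧ i < n ∧ TopHyperbolic n f p i

/-- A subset `S ⊆ M` is a locally flat `k`-dimensional submanifold of the `n`-manifold
`M`: every `x ∈ S` has an open neighbourhood `U` and a homeomorphism `ψ : U ≃ₜ ℝⁿ` with
`ψ(U ∩ S) = ℝᵏ × {0}`. -/
def IsLocallyFlatSubmanifold (n k : ℕ) {M : Type*} [TopologicalSpace M] (S : Set M) : Prop :=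
  ∀ x ∈ S, ∃ U : Set M, IsOpen U ∧ x ∈ U ∧
    ∃ ψ : U ≃ₜ EuclideanSpace ℝ (Fin n),
      ψ '' {y : U | (y : M) ∈ S} = {y | ∀ j : Fin n, k ≤ (j : ℕ) → y j = 0}

/-- Two paths inside a simply connected set are homotopic. -/
theorem homotopic_of_isSimplyConnected {X : Type*} [TopologicalSpace X] {s : Set X}
    (hs : IsSimplyConnected s) {x y : X} (p q : Path x y) (hp : ∀ t, p t ∈ s)
    (hq : ∀ t, q t ∈ s) : p.Homotopic q := by
  have hx : x ∈ s := by simpa using hp 0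
  have hy : y ∈ s := by simpa using hp 1
  have := hs.simplyConnectedSpace
  let p' : Path (⟨x, hx⟩ : s) ⟨y, hy⟩ :=
    { toFun := fun t => ⟨p t, hp t⟩, source' := by simp, target' := by simp }
  let q' : Path (⟨x, hx⟩ : s) ⟨y, hy⟩ :=
    { toFun := fun t => ⟨q t, hq t⟩, source' := by simp, target' := by simp }
  have h := SimplyConnectedSpace.paths_homotopic p' q'
  have h2 := h.map (ContinuousMap.mk (Subtype.val : s → X) continuous_subtype_val)
  exact h2

/-- Neighbourhoods adapted to `B`. -/
def GoodSet {X : Type*} [TopologicalSpace X] (B V : Set X) : Prop :=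
  IsOpen V ∧ IsSimplyConnected V ∧ IsPathConnected (V ∩ B)

/-- The canonical path class from `b` to `x`. -/
def GoodPath {X : Type*} [TopologicalSpace X] (B : Set X) {b x : X} (γ : Path b x) : Prop :=
  ∀ V, GoodSet B V → x ∈ V → ∀ y, y ∈ B → ∀ (p : Path b y) (q : Path y x),
    (∀ t, p t ∈ B) → (∀ t, q t ∈ V) → γ.Homotopic (p.trans q)

theorem trans_mem {X : Type*} [TopologicalSpace X] {V : Set X} {x y z : X} {p : Path x y}
    {q : Path y z} (hp : ∀ t, p t ∈ V) (hq : ∀ t, q t ∈ V) : ∀ t, p.trans q t ∈ V := by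
  intro t
  rw [Path.trans_apply]
  split_ifs
  · exact hp _
  · exact hq _

section
variable {X : Type*} [TopologicalSpace X] {B : Set X}

theorem good_indep (hB : IsSimplyConnected B) {V : Set X} (hV : GoodSet B V) {b x y y' : X}
    (p : Path b y) (q : Path y x) (p' : Path b y') (q' : Path y' x)
    (hp : ∀ t, p t ∈ B) (hq : ∀ t, q t ∈ V) (hp' : ∀ t, p' t ∈ B) (hq' : ∀ t, q' t ∈ V) :
    (p.trans q).Homotopic (p'.trans q') := by
  have hy : y ∈ V ∩ B := ⟨by simpa using hq 0, by simpa using hp 1⟩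
  have hy' : y' ∈ V ∩ B := ⟨by simpa using hq' 0, by simpa using hp' 1⟩
  obtain ⟨r, hr⟩ := hV.2.2.joinedIn y hy y' hy'
  have h1 : (p.trans r).Homotopic p' := homotopic_of_isSimplyConnected hB _ _
    (trans_mem hp fun t => (hr t).2) hp'
  have h2 : (r.trans q').Homotopic q := homotopic_of_isSimplyConnected hV.2.1 _ _
    (trans_mem (fun t => (hr t).1) hq') hq
  have h3 := Path.Homotopic.hcomp (Path.Homotopic.refl p) h2
  have h4 := Path.Homotopic.hcomp h1 (Path.Homotopic.refl q')
  exact h3.symm.trans (Path.Homotopic.trans ⟨(Path.Homotopy.transAssoc p r q').symm⟩ h4)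

theorem goodPath_trans (hB : IsSimplyConnected B)
    (hbasis : ∀ x : X, ∀ W ∈ 𝓝 x, ∃ V, V ⊆ W ∧ x ∈ V ∧ GoodSet B V)
    {V : Set X} (hV : GoodSet B V) {b x y : X} (p : Path b y) (q : Path y x)
    (hp : ∀ t, p t ∈ B) (hq : ∀ t, q t ∈ V) : GoodPath B (p.trans q) := by
  intro V' hV' hx y' hy' p' q' hp' hq'
  have hxV : x ∈ V := by simpa using hq 1
  obtain ⟨V'', hsub, hx'', hV''⟩ := hbasis x (V ∩ V')
    ((hV.1.inter hV'.1).mem_nhds ⟨hxV, hx⟩)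
  obtain ⟨z, hz⟩ := hV''.2.2.nonempty
  have hbB : b ∈ B := by simpa using hp 0
  obtain ⟨p2, hp2⟩ := hB.isPathConnected.joinedIn b hbB z hz.2
  obtain ⟨q2, hq2⟩ := hV''.2.1.isPathConnected.joinedIn z hz.1 x hx''
  exact (good_indep hB hV p q p2 q2 hp hq hp2 fun t => (hsub (hq2 t)).1).trans
    (good_indep hB hV' p2 q2 p' q' hp2 (fun t => (hsub (hq2 t)).2) hp' hq')

theorem exists_rep (hB : IsSimplyConnected B)
    (hbasis : ∀ x : X, ∀ W ∈ 𝓝 x, ∃ V, V ⊆ W ∧ x ∈ V ∧ GoodSet B V)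
    {b : X} (hb : b ∈ B) {V : Set X} (hV : GoodSet B V) {x : X} (hx : x ∈ V) :
    ∃ y, y ∈ B ∧ ∃ (p : Path b y) (q : Path y x), (∀ t, p t ∈ B) ∧ (∀ t, q t ∈ V) ∧
      GoodPath B (p.trans q) := by
  obtain ⟨z, hz⟩ := hV.2.2.nonempty
  obtain ⟨p2, hp2⟩ := hB.isPathConnected.joinedIn b hb z hz.2
  obtain ⟨q2, hq2⟩ := hV.2.1.isPathConnected.joinedIn z hz.1 x hx
  exact ⟨z, hz.2, p2, q2, hp2, hq2, goodPath_trans hB hbasis hV p2 q2 hp2 hq2⟩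

theorem GoodPath.congr {b x : X} {γ γ' : Path b x} (h : GoodPath B γ) (h' : γ'.Homotopic γ) :
    GoodPath B γ' := fun V hV hx y hy p q hp hq => h'.trans (h V hV hx y hy p q hp hq)

theorem GoodPath.step (hB : IsSimplyConnected B)
    (hbasis : ∀ x : X, ∀ W ∈ 𝓝 x, ∃ V, V ⊆ W ∧ x ∈ V ∧ GoodSet B V)
    {b : X} (hb : b ∈ B) {V : Set X} (hV : GoodSet B V) {x x' : X} (γ : Path b x)
    (hγ : GoodPath B γ) (r : Path x x') (hr : ∀ t, r t ∈ V) : GoodPath B (γ.trans r) := by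
  have hx : x ∈ V := by simpa using hr 0
  obtain ⟨y, hy, p, q, hp, hq, -⟩ := exists_rep hB hbasis hb hV hx
  have h1 := hγ V hV hx y hy p q hp hq
  have h2 := goodPath_trans hB hbasis hV p (q.trans r) hp (trans_mem hq hr)
  exact h2.congr ((h1.hcomp (Path.Homotopic.refl r)).trans
    ⟨Path.Homotopy.transAssoc p q r⟩)

theorem GoodPath.path (hB : IsSimplyConnected B)
    (hbasis : ∀ x : X, ∀ W ∈ 𝓝 x, ∃ V, V ⊆ W ∧ x ∈ V ∧ GoodSet B V)
    {b : X} (hb : b ∈ B) {x x' : X} (γ : Path b x)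
    (hγ : GoodPath B γ) (δ : Path x x') : GoodPath B (γ.trans δ) := by
  obtain ⟨t, ht0, htm, ⟨N, hN⟩, ht⟩ := exists_monotone_Icc_subset_open_cover_unitInterval
    (ι := {V : Set X // GoodSet B V}) (c := fun V => δ ⁻¹' V.1)
    (fun V => V.2.1.preimage δ.continuous) (by
      intro s _
      obtain ⟨V, -, hs, hV⟩ := hbasis (δ s) Set.univ Filter.univ_mem
      exact Set.mem_iUnion.2 ⟨⟨V, hV⟩, hs⟩)
  have key : ∀ k, GoodPath B ((γ.cast rfl δ.source).trans (δ.subpath 0 (t k))) := by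
    intro k
    induction k with
    | zero =>
      rw [ht0, Path.subpath_self]
      have : GoodPath B (γ.cast rfl δ.source) := by
        have h0 := δ.source
        intro V hV hx y hy p q hp hq
        have := hγ V hV (h0 ▸ hx) y hy p (q.cast rfl h0.symm) hp hq
        exact this.pathCast rfl h0
      exact this.congr ⟨Path.Homotopy.transRefl _⟩
    | succ k ih =>
      obtain ⟨⟨V, hV⟩, hVk⟩ := ht k
      have := ih.step hB hbasis hb hV _ (δ.subpath (t k) (t (k+1))) (by
        intro s
        have hs : δ.subpath (t k) (t (k+1)) s ∈ Set.range (δ.subpath (t k) (t (k+1))) := ⟨s, rfl⟩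
        rw [Path.range_subpath_of_le _ _ _ (htm (Nat.le_succ k))] at hs
        obtain ⟨u, hu, hu'⟩ := hs
        rw [← hu']
        exact hVk hu)
      refine this.congr (Path.Homotopic.symm ?_)
      refine Path.Homotopic.trans ⟨Path.Homotopy.transAssoc _ _ _⟩ ?_
      exact (Path.Homotopic.refl _).hcomp ⟨Path.Homotopy.subpathTransSubpath δ _ _ _⟩
  have h := key N
  rw [hN N le_rfl, Path.subpath_zero_one] at h
  have h1 := δ.target
  intro V hV hx y hy p q hp hq
  have := h V hV (h1.symm ▸ hx) y hy p (q.cast rfl h1) hp hq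
  exact this.pathCast rfl h1.symm

/-- A van Kampen type criterion for simple connectedness. -/
theorem simplyConnected_of_good (hB : IsSimplyConnected B)
    (hbasis : ∀ x : X, ∀ W ∈ 𝓝 x, ∃ V, V ⊆ W ∧ x ∈ V ∧ GoodSet B V) :
    SimplyConnectedSpace X := by
  obtain ⟨b, hb⟩ := hB.nonempty
  have hex : ∀ x : X, ∃ V, GoodSet B V ∧ x ∈ V := fun x => by
    obtain ⟨V, -, hs, hV⟩ := hbasis x Set.univ Filter.univ_mem
    exact ⟨V, hV, hs⟩
  have hg : ∀ x : X, ∃ γ : Path b x, GoodPath B γ := fun x => by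
    obtain ⟨V, hV, hx⟩ := hex x
    obtain ⟨y, hy, p, q, hp, hq, h⟩ := exists_rep hB hbasis hb hV hx
    exact ⟨_, h⟩
  rw [simply_connected_iff_paths_homotopic']
  refine ⟨⟨⟨b⟩, fun x y => ?_⟩, ?_⟩
  · obtain ⟨γ, -⟩ := hg x
    obtain ⟨γ', -⟩ := hg y
    exact ⟨γ.symm.trans γ'⟩
  · intro x y p₁ p₂
    obtain ⟨γ, hγ⟩ := hg x
    have h1 := hγ.path hB hbasis hb γ p₁
    have h2 := hγ.path hB hbasis hb γ p₂
    obtain ⟨V, hV, hy⟩ := hex y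
    obtain ⟨z, hz, p, q, hp, hq, -⟩ := exists_rep hB hbasis hb hV hy
    have h3 := (h1 V hV hy z hz p q hp hq).trans (h2 V hV hy z hz p q hp hq).symm
    rw [← Path.Homotopic.Quotient.eq] at h3 ⊢
    rw [Path.Homotopic.Quotient.mk_trans, Path.Homotopic.Quotient.mk_trans] at h3
    have h4 := congrArg (fun c => (Path.Homotopic.Quotient.mk γ).symm.trans c) h3
    simpa [← Path.Homotopic.Quotient.trans_assoc] using h4
end

/-- Gluing continuity along an open embedding. -/
theorem continuous_of_openEmbedding_glue {X Y Z : Type*} [TopologicalSpace X] [TopologicalSpace Y]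
    [TopologicalSpace Z] {j : Y → X} (hj : IsOpenEmbedding j) {C : Set X} (hC : IsClosed C)
    (hCj : C ⊆ Set.range j) {F F0 : X → Z} (h1 : Continuous (F ∘ j)) (h0 : Continuous F0)
    (hF : ∀ x ∉ C, F x = F0 x) : Continuous F := by
  rw [continuous_iff_continuousAt]
  intro x
  by_cases hx : x ∈ C
  · obtain ⟨y, rfl⟩ := hCj hx
    exact hj.continuousAt_iff.1 h1.continuousAt
  · refine (h0.continuousAt (x := x)).congr ?_
    filter_upwards [hC.isOpen_compl.mem_nhds hx] with z hz
    exact (hF z hz).symm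

/-- Any plane curve is approximated by curves that miss the origin. -/
theorem exists_nonvanishing_near (g : C(unitInterval, ℝ × ℝ)) {δ : ℝ} (hδ : 0 < δ) :
    ∃ G : C(unitInterval, ℝ × ℝ), ∀ t, G t ≠ 0 ∧ ‖G t - g t‖ < δ := by
  obtain ⟨P, hP⟩ := exists_polynomial_near_continuousMap 0 1
    (⟨fun t => (g t).1, by fun_prop⟩ : C(unitInterval, ℝ)) (δ / 2) (by positivity)
  obtain ⟨Q, hQ⟩ := exists_polynomial_near_continuousMap 0 1
    (⟨fun t => (g t).2, by fun_prop⟩ : C(unitInterval, ℝ)) (δ / 2) (by positivity)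
  have hd : Dense (Set.range fun t : ℝ => (P.eval t, Q.eval t))ᶜ := by
    apply ContDiff.dense_compl_range_of_finrank_lt_finrank
    · exact (by simpa using P.contDiff_aeval (𝕜 := ℝ) 1 : ContDiff ℝ 1 fun t : ℝ => P.eval t).prodMk (by simpa using Q.contDiff_aeval (𝕜 := ℝ) 1 : ContDiff ℝ 1 fun t : ℝ => Q.eval t)
    · simp
  obtain ⟨v, hv, hvδ⟩ := hd.exists_dist_lt (0 : ℝ × ℝ) (half_pos hδ)
  rw [dist_comm, dist_zero_right] at hvδ
  refine ⟨⟨fun t => (P.eval (t : ℝ), Q.eval (t : ℝ)) - v, ?_⟩, fun t => ⟨?_, ?_⟩⟩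
  · have := P.continuous
    have := Q.continuous
    fun_prop
  · intro h
    exact hv ⟨t, sub_eq_zero.1 h⟩
  · have h1 := (ContinuousMap.norm_lt_iff _ (half_pos hδ)).1 hP t
    have h2 := (ContinuousMap.norm_lt_iff _ (half_pos hδ)).1 hQ t
    have h3 : ‖((P.eval (t : ℝ), Q.eval (t : ℝ)) : ℝ × ℝ) - g t‖ < δ / 2 := by
      rw [Prod.norm_def]
      exact max_lt (by simpa using h1) (by simpa using h2)
    have : ((P.eval (t : ℝ), Q.eval (t : ℝ)) : ℝ × ℝ) - v - g t
      = ((P.eval (t : ℝ), Q.eval (t : ℝ)) - g t) - v := by abel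
    simp only [ContinuousMap.coe_mk]
    rw [this]
    linarith [norm_sub_le (((P.eval (t : ℝ), Q.eval (t : ℝ)) : ℝ × ℝ) - g t) v]

section
variable {M E : Type*} [MetricSpace M] [CompactSpace M] [NormedAddCommGroup E] [NormedSpace ℝ E]
  [ProperSpace E]

/-- The codimension two disc of radius `r` in a chart. -/
def chartDisc (e : E → M) (π : E →L[ℝ] ℝ × ℝ) (r : ℝ) : Set M :=
  e '' {v | π v = 0 ∧ ‖v‖ ≤ r}

theorem isCompact_chartDisc {e : E → M} (he : Continuous e) (π : E →L[ℝ] ℝ × ℝ) (r : ℝ) :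
    IsCompact (chartDisc e π r) := by
  refine IsCompact.image ?_ he
  have : {v : E | π v = 0 ∧ ‖v‖ ≤ r} = Metric.closedBall 0 r ∩ π ⁻¹' {0} := by
    ext v; simp [and_comm]
  rw [this]
  exact (isCompact_closedBall 0 r).inter_right (isClosed_singleton.preimage π.continuous)

theorem dense_avoid {e : E → M} (he : IsOpenEmbedding e) (π : E →L[ℝ] ℝ × ℝ)
    (σ : ℝ × ℝ →L[ℝ] E) (hπσ : ∀ w, π (σ w) = w) (r : ℝ) :
    Dense {γ : C(unitInterval, M) | ∀ t, γ t ∉ chartDisc e π r} := by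
  classical
  let ψ : E → ℝ := fun v => max 0 (min 1 (r + 2 - ‖v‖))
  have hψc : Continuous ψ := by fun_prop
  have hψ0 : ∀ v, ψ v ≠ 0 → ‖v‖ ≤ r + 2 := by
    intro v hv
    by_contra h
    push Not at h
    apply hv
    have : min 1 (r + 2 - ‖v‖) ≤ 0 := (min_le_right _ _).trans (by linarith)
    exact max_eq_left this
  have hψ1 : ∀ v, ‖v‖ ≤ r + 1 → ψ v = 1 := by
    intro v hv
    have : min 1 (r + 2 - ‖v‖) = 1 := min_eq_left (by linarith)
    simp [ψ, this]
  have hψ01 : ∀ v, 0 ≤ ψ v ∧ ψ v ≤ 1 := fun v =>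
    ⟨le_max_left _ _, max_le zero_le_one (min_le_left _ _)⟩
  let K : Set M := e '' Metric.closedBall 0 (r + 2)
  have hK : IsClosed K := ((isCompact_closedBall _ _).image he.continuous).isClosed
  let T : (ℝ × ℝ) × M → M := fun a =>
    Function.extend e (fun v => e (v + ψ v • σ a.1)) id a.2
  have hTe : ∀ w v, T (w, e v) = e (v + ψ v • σ w) := fun w v =>
    he.injective.extend_apply _ _ _
  have hTn : ∀ w z, z ∉ Set.range e → T (w, z) = z := fun w z hz =>
    Function.extend_apply' _ _ _ hz
  have hTc : Continuous T := by
    refine continuous_of_openEmbedding_glue (j := Prod.map id e) (IsOpenEmbedding.id.prodMap he)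
      (C := Prod.snd ⁻¹' K) (hK.preimage continuous_snd) ?_ (F0 := Prod.snd) ?_ continuous_snd ?_
    · rintro ⟨w, z⟩ ⟨v, -, hv⟩
      exact ⟨(w, v), by simpa using hv⟩
    · have : T ∘ Prod.map id e = fun a : (ℝ × ℝ) × E => e (a.2 + ψ a.2 • σ a.1) := by
        ext ⟨w, v⟩
        exact hTe w v
      rw [this]
      have := he.continuous
      fun_prop
    · rintro ⟨w, z⟩ hz
      by_cases hr : z ∈ Set.range e
      · obtain ⟨v, rfl⟩ := hr
        rw [hTe]
        have : ψ v = 0 := by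
          by_contra h
          exact hz ⟨v, by simpa using hψ0 v h, rfl⟩
        simp [this]
      · exact hTn w z hr
  have hT0 : ∀ z, T (0, z) = z := by
    intro z
    by_cases hr : z ∈ Set.range e
    · obtain ⟨v, rfl⟩ := hr
      simp [hTe]
    · exact hTn 0 z hr
  let g : M → ℝ × ℝ := Function.extend e (fun v => ψ v • π v) 0
  have hge : ∀ v, g (e v) = ψ v • π v := fun v => he.injective.extend_apply _ _ _
  have hgn : ∀ z, z ∉ Set.range e → g z = 0 := fun z hz => Function.extend_apply' _ _ _ hz
  have hgc : Continuous g := by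
    refine continuous_of_openEmbedding_glue he hK (Set.image_subset_range _ _) (F0 := 0) ?_
      continuous_const ?_
    · have : g ∘ e = fun v => ψ v • π v := funext hge
      rw [this]
      fun_prop
    · intro z hz
      by_cases hr : z ∈ Set.range e
      · obtain ⟨v, rfl⟩ := hr
        have : ψ v = 0 := by
          by_contra h
          exact hz ⟨v, by simpa using hψ0 v h, rfl⟩
        simp [hge, this]
      · exact hgn z hr
  rw [Metric.dense_iff]
  intro γ ε hε
  have hclose : ∀ᶠ w : ℝ × ℝ in 𝓝 0, ∀ z ∈ (Set.univ : Set M), dist (T (w, z)) z < ε := by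
    apply isCompact_univ.eventually_forall_of_forall_eventually
    intro z _
    have hc : ContinuousAt (fun a : (ℝ × ℝ) × M => dist (T a) a.2) (0, z) := by fun_prop
    refine hc.eventually_lt continuousAt_const ?_
    simpa [hT0] using hε
  have hsmall : ∀ᶠ w : ℝ × ℝ in 𝓝 0, ‖σ w‖ < 1 := by
    have hc : ContinuousAt (fun w : ℝ × ℝ => ‖σ w‖) 0 := by fun_prop
    refine hc.eventually_lt continuousAt_const ?_
    simp
  obtain ⟨δ, hδ, hδw⟩ := Metric.eventually_nhds_iff.1 (hclose.and hsmall)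
  obtain ⟨G, hG⟩ := exists_nonvanishing_near ⟨fun t => g (γ t), by fun_prop⟩ hδ
  have hG' : ∀ t, (∀ z, dist (T (G t - g (γ t), z)) z < ε) ∧ ‖σ (G t - g (γ t))‖ < 1 := by
    intro t
    have := hδw (y := G t - g (γ t)) (by simpa using (hG t).2)
    exact ⟨fun z => this.1 z trivial, this.2⟩
  let γ' : C(unitInterval, M) := ⟨fun t => T (G t - g (γ t), γ t), by fun_prop⟩
  refine ⟨γ', ?_, ?_⟩
  · rw [Metric.mem_ball, ContinuousMap.dist_lt_iff hε]
    intro t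
    exact (hG' t).1 _
  · rintro t ⟨u, ⟨hu0, hur⟩, hu⟩
    change e u = T (G t - g (γ t), γ t) at hu
    by_cases hr : γ t ∈ Set.range e
    · obtain ⟨v, hv⟩ := hr
      rw [← hv, hTe] at hu
      have huv := he.injective hu
      by_cases hvr : ‖v‖ ≤ r + 1
      · rw [hψ1 v hvr, hge, hψ1 v hvr, one_smul, one_smul] at huv
        rw [huv, map_add, hπσ] at hu0
        exact (hG t).1 (by simpa using hu0)
      · push Not at hvr
        have h1 := (hG' t).2
        rw [← hv] at h1
        have h2 : ‖ψ v • σ (G t - g (e v))‖ ≤ 1 := by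
          rw [norm_smul, Real.norm_of_nonneg (hψ01 v).1]
          nlinarith [hψ01 v, norm_nonneg (σ (G t - g (e v)))]
        have h3 := norm_sub_norm_le v (-(ψ v • σ (G t - g (e v))))
        rw [norm_neg, sub_neg_eq_add, ← huv] at h3
        linarith
    · rw [hTn _ _ hr] at hu
      exact hr ⟨u, hu⟩

theorem residual_avoid {e : E → M} (he : IsOpenEmbedding e) (π : E →L[ℝ] ℝ × ℝ)
    (σ : ℝ × ℝ →L[ℝ] E) (hπσ : ∀ w, π (σ w) = w) (r : ℝ) :
    {γ : C(unitInterval, M) | ∀ t, γ t ∉ chartDisc e π r} ∈ residual C(unitInterval, M) := by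
  refine residual_of_dense_open ?_ (dense_avoid he π σ hπσ r)
  have h := ContinuousMap.isOpen_setOfPred_mapsTo (isCompact_univ (X := unitInterval))
    (isCompact_chartDisc he.continuous π r).isClosed.isOpen_compl
  convert h using 1
  ext γ
  simp [Set.MapsTo]
end

/-- If paths in `B` are dense, then `V ∩ B` is path connected for each path connected open `V`. -/
theorem isPathConnected_inter {M : Type*} [MetricSpace M] [LocallyPathConnectedSpace M] {B V : Set M}
    (hB : IsOpen B) (hd : Dense {γ : C(unitInterval, M) | ∀ t, γ t ∈ B})
    (hV : IsOpen V) (hVp : IsPathConnected V) : IsPathConnected (V ∩ B) := by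
  rw [isPathConnected_iff]
  have hopen : IsOpen {γ : C(unitInterval, M) | ∀ t, γ t ∈ V} := by
    convert ContinuousMap.isOpen_setOfPred_mapsTo (isCompact_univ (X := unitInterval)) hV using 1
    ext γ
    simp [Set.MapsTo]
  constructor
  · obtain ⟨x, hx⟩ := hVp.nonempty
    obtain ⟨γ, h1, h2⟩ := hd.inter_open_nonempty _ hopen ⟨ContinuousMap.const _ x, fun t => hx⟩
    exact ⟨γ 0, h1 0, h2 0⟩
  · intro x hx y hy
    obtain ⟨p, hp⟩ := hVp.joinedIn x hx.1 y hy.1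
    have hVB := hV.inter hB
    have hox : IsOpen (pathComponentIn (V ∩ B) x) := hVB.pathComponentIn x
    have hoy : IsOpen (pathComponentIn (V ∩ B) y) := hVB.pathComponentIn y
    have ho0 : IsOpen {γ : C(unitInterval, M) | γ 0 ∈ pathComponentIn (V ∩ B) x} :=
      hox.preimage (continuous_eval_const _)
    have ho1 : IsOpen {γ : C(unitInterval, M) | γ 1 ∈ pathComponentIn (V ∩ B) y} :=
      hoy.preimage (continuous_eval_const _)
    obtain ⟨γ, ⟨⟨h1, h2⟩, h3⟩, h4⟩ := hd.inter_open_nonempty _ ((hopen.inter ho0).inter ho1)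
      ⟨p.toContinuousMap, ⟨⟨fun t => hp t, by
        have : p 0 = x := p.source
        simpa [this] using mem_pathComponentIn_self hx⟩, by
        have : p 1 = y := p.target
        simpa [this] using mem_pathComponentIn_self hy⟩⟩
    have h5 : JoinedIn (V ∩ B) (γ 0) (γ 1) :=
      ⟨⟨γ, rfl, rfl⟩, fun t => ⟨h1 t, h4 t⟩⟩
    exact (JoinedIn.trans h2 h5).trans (JoinedIn.symm h3)

section
variable {n i : ℕ} {δu δs : ℝ}

theorem modelMap_abs_lt (hu : δu = 1 ∨ δu = -1) (v : EuclideanSpace ℝ (Fin n)) (j : Fin n)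
    (hj : (j : ℕ) < i) : |modelMap n i δu δs v j| = 2 * |v j| := by
  have : modelMap n i δu δs v j = (if (j : ℕ) = 0 then 2 * δu else 2) * v j := by
    simp [modelMap, hj]
  rw [this, abs_mul]
  congr 1
  rcases hu with rfl | rfl <;> split_ifs <;> simp

theorem modelMap_abs_ge (hs : δs = 1 ∨ δs = -1) (v : EuclideanSpace ℝ (Fin n)) (j : Fin n)
    (hj : ¬ (j : ℕ) < i) : |modelMap n i δu δs v j| = 2⁻¹ * |v j| := by
  have : modelMap n i δu δs v j = (if (j : ℕ) = i then δs / 2 else 1 / 2) * v j := by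
    simp [modelMap, hj]
  rw [this, abs_mul]
  congr 1
  rcases hs with rfl | rfl <;> split_ifs <;> norm_num [abs_div]

theorem modelMap_surjective (hu : δu = 1 ∨ δu = -1) (hs : δs = 1 ∨ δs = -1) :
    Function.Surjective (modelMap n i δu δs) := by
  intro w
  refine ⟨WithLp.toLp 2 fun j =>
    if (j : ℕ) < i then (if (j : ℕ) = 0 then 2 * δu else 2)⁻¹ * w j
    else (if (j : ℕ) = i then δs / 2 else 1 / 2)⁻¹ * w j, ?_⟩
  have hu0 : δu ≠ 0 := by rcases hu with rfl | rfl <;> norm_num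
  have hs0 : δs ≠ 0 := by rcases hs with rfl | rfl <;> norm_num
  ext j
  simp only [modelMap]
  split_ifs <;> field_simp

theorem modelMap_iterate_lt (hu : δu = 1 ∨ δu = -1) (v : EuclideanSpace ℝ (Fin n)) (j : Fin n)
    (hj : (j : ℕ) < i) (k : ℕ) : |(modelMap n i δu δs)^[k] v j| = 2 ^ k * |v j| := by
  induction k with
  | zero => simp
  | succ k ih =>
    rw [Function.iterate_succ_apply', modelMap_abs_lt hu _ _ hj, ih]
    ring

theorem modelMap_iterate_ge (hs : δs = 1 ∨ δs = -1) (v : EuclideanSpace ℝ (Fin n)) (j : Fin n)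
    (hj : ¬ (j : ℕ) < i) (k : ℕ) :
    |(modelMap n i δu δs)^[k] v j| = (2⁻¹ : ℝ) ^ k * |v j| := by
  induction k with
  | zero => simp
  | succ k ih =>
    rw [Function.iterate_succ_apply', modelMap_abs_ge hs _ _ hj, ih]
    ring
end

/-- Chart data of a topologically hyperbolic periodic point. -/
structure HypChart {M : Type*} [MetricSpace M] (n : ℕ) (f : M → M) (p : M) (i m : ℕ)
    (δu δs : ℝ) (e : EuclideanSpace ℝ (Fin n) → M) : Prop where
  mpos : 0 < m
  hu : δu = 1 ∨ δu = -1
  hs : δs = 1 ∨ δs = -1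
  emb : IsOpenEmbedding e
  mem : p ∈ Set.range e
  per : f^[m] p = p
  conj : ∀ v, f^[m] (e v) = e (modelMap n i δu δs v)

section
variable {M : Type*} [MetricSpace M] {n : ℕ}

theorem TopHyperbolic.exists_chart {f : M ≃ₜ M} {p : M} {i : ℕ} (h : TopHyperbolic n f p i) :
    ∃ m δu δs e, HypChart n f p i m δu δs e := by
  obtain ⟨m, hm, hper, -, δu, δs, hu, hs, U, hU, hp, φ, hφ⟩ := h
  refine ⟨m, δu, δs, fun v => (φ.symm v : M), hm, hu, hs,
    hU.isOpenEmbedding_subtypeVal.comp φ.symm.isOpenEmbedding,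
    ⟨φ ⟨p, hp⟩, by simp⟩, hper, fun v => ?_⟩
  rw [hφ]
  simp

variable {f : M ≃ₜ M} {p : M} {i m : ℕ} {δu δs : ℝ} {e : EuclideanSpace ℝ (Fin n) → M}

theorem HypChart.iterate (H : HypChart n f p i m δu δs e) (k : ℕ) (v) :
    f^[m * k] (e v) = e ((modelMap n i δu δs)^[k] v) := by
  rw [Function.iterate_mul]
  induction k with
  | zero => simp
  | succ k ih => rw [Function.iterate_succ_apply', Function.iterate_succ_apply', ih, H.conj]

theorem HypChart.range_of_iterate (H : HypChart n f p i m δu δs e) (k : ℕ) {x : M}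
    (hx : f^[m * k] x ∈ Set.range e) : x ∈ Set.range e := by
  obtain ⟨v, hv⟩ := hx
  obtain ⟨w, hw⟩ := (modelMap_surjective H.hu H.hs).iterate k v
  refine ⟨w, ?_⟩
  apply f.injective.iterate (m * k)
  rw [H.iterate, hw, hv]

/-- Points converging to `p` lie on the stable manifold in the chart. -/
theorem HypChart.stable (H : HypChart n f p i m δu δs e) {N : ℕ} (hN : 0 < N) (hmN : m ∣ N)
    {x : M} (hx : Tendsto (fun k => f^[N * k] x) atTop (𝓝 p)) :
    ∃ v, e v = x ∧ ∀ j : Fin n, (j : ℕ) < i → v j = 0 := by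
  obtain ⟨q, rfl⟩ := hmN
  have hq : 0 < q := Nat.pos_of_mul_pos_left hN
  obtain ⟨v0, hv0⟩ := H.mem
  have hopen : e '' Metric.ball v0 1 ∈ 𝓝 p :=
    (H.emb.isOpenMap _ Metric.isOpen_ball).mem_nhds ⟨v0, by simp, hv0⟩
  have hev := hx hopen
  obtain ⟨k0, hk0⟩ := eventually_atTop.1 hev
  have hxr : x ∈ Set.range e := by
    obtain ⟨w, -, hw⟩ := hk0 k0 le_rfl
    exact H.range_of_iterate (q * k0) ⟨w, by rw [hw]; simp only [mul_assoc]⟩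
  obtain ⟨v, rfl⟩ := hxr
  refine ⟨v, rfl, fun j hj => ?_⟩
  by_contra hne
  have hpos : 0 < |v j| := abs_pos.2 hne
  have hbd : ∀ k ≥ k0, 2 ^ (q * k) * |v j| ≤ ‖v0‖ + 1 := by
    intro k hk
    obtain ⟨w, hw, hw'⟩ := hk0 k hk
    simp only [mul_assoc] at hw'
    rw [H.iterate] at hw'
    have := H.emb.injective hw'
    rw [← modelMap_iterate_lt (δs := δs) H.hu v j hj, ← this]
    have h1 : |w j| ≤ ‖w‖ := by simpa using PiLp.norm_apply_le w j
    have h2 : ‖w‖ < ‖v0‖ + 1 := by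
      rw [Metric.mem_ball, dist_eq_norm] at hw
      linarith [norm_sub_norm_le w v0]
    linarith
  obtain ⟨k1, hk1⟩ := pow_unbounded_of_one_lt ((‖v0‖ + 1) / |v j|) (one_lt_two : (1 : ℝ) < 2)
  rw [div_lt_iff₀ hpos] at hk1
  have h3 := hbd (max k0 k1) (le_max_left _ _)
  have h4 : (2 : ℝ) ^ k1 ≤ 2 ^ (q * max k0 k1) := by
    apply pow_le_pow_right₀ one_le_two
    calc k1 ≤ max k0 k1 := le_max_right _ _
      _ ≤ q * max k0 k1 := Nat.le_mul_of_pos_left _ hq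
  nlinarith

/-- In the chart of a sink everything converges to the sink. -/
theorem HypChart.sink (H : HypChart n f p 0 m δu δs e) {x : M} (hx : x ∈ Set.range e) :
    Tendsto (fun k => f^[m * k] x) atTop (𝓝 p) := by
  obtain ⟨v, rfl⟩ := hx
  obtain ⟨v0, hv0⟩ := H.mem
  have h0 : v0 = 0 := by
    have h1 := H.conj v0
    rw [hv0, H.per, ← hv0] at h1
    have h2 := H.emb.injective h1
    ext j
    have h3 := modelMap_abs_ge (δu := δu) (i := 0) H.hs v0 j (by simp)
    rw [← h2] at h3
    have : |v0 j| = 0 := by linarith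
    simpa using this
  rw [← hv0]
  simp_rw [H.iterate]
  refine (H.emb.continuous.tendsto v0).comp ?_
  rw [h0, (PiLp.homeomorph 2 _).isInducing.tendsto_nhds_iff]
  rw [tendsto_pi_nhds]
  intro j
  change Tendsto (fun k => (modelMap n 0 δu δs)^[k] v j) atTop (𝓝 0)
  rw [tendsto_zero_iff_abs_tendsto_zero]
  have : (fun k => |(modelMap n 0 δu δs)^[k] v j|) = fun k => (2⁻¹ : ℝ) ^ k * |v j| :=
    funext fun k => modelMap_iterate_ge H.hs v j (by simp) k
  have h5 : Tendsto (fun k : ℕ => (2⁻¹ : ℝ) ^ k * |v j|) atTop (𝓝 0) := by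
    simpa using (tendsto_pow_atTop_nhds_zero_of_lt_one (by norm_num : (0 : ℝ) ≤ 2⁻¹)
      (by norm_num)).mul_const |v j|
  rw [← this] at h5
  exact h5

theorem sink_unique {q : M} {m' : ℕ} {δu' δs' : ℝ} {e' : EuclideanSpace ℝ (Fin n) → M}
    (H : HypChart n f p 0 m δu δs e) (H' : HypChart n f q 0 m' δu' δs' e') {x : M}
    (hx : x ∈ Set.range e) (hx' : x ∈ Set.range e') : p = q := by
  have h1 := (H.sink hx).comp
    (tendsto_id.const_mul_atTop' H'.mpos : Tendsto (fun k : ℕ => m' * k) atTop atTop)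
  have h2 := (H'.sink hx').comp
    (tendsto_id.const_mul_atTop' H.mpos : Tendsto (fun k : ℕ => m * k) atTop atTop)
  refine tendsto_nhds_unique h1 (h2.congr fun k => ?_)
  simp only [Function.comp]
  rw [Nat.mul_left_comm]

/-- Limit points of an orbit are chain recurrent. -/
theorem chainRecurrent_of_clusterPt {N : ℕ} (hN : 0 < N) {x y : M}
    (h : MapClusterPt y atTop (fun k : ℕ => f^[N * k] x)) : y ∈ chainRecurrentSet (⇑f) := by
  intro ε hε
  obtain ⟨δ, hδ, hδf⟩ := Metric.continuousAt_iff.1 (f.continuous.continuousAt (x := y)) ε hε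
  have hfr : ∃ᶠ k in atTop, dist (f^[N * k] x) y < min δ ε :=
    h.frequently (Metric.ball_mem_nhds y (lt_min hδ hε))
  rw [frequently_atTop] at hfr
  obtain ⟨k1, -, hk1⟩ := hfr 0
  obtain ⟨k2, hk2, hk2'⟩ := hfr (k1 + 2)
  have hlt : N * k1 + 2 ≤ N * k2 := by nlinarith
  refine ⟨2, by norm_num, ![y, f (f^[N * k1] x), y], ![1, N * k2 - N * k1 - 1], rfl, rfl, ?_, ?_⟩
  · intro i
    fin_cases i
    · simp
    · simp
      omega
  · intro i
    fin_cases i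
    · simp
      rw [dist_comm]
      exact hδf (hk1.trans_le (min_le_left _ _))
    · have : f^[N * k2 - N * k1 - 1] (f (f^[N * k1] x)) = f^[N * k2] x := by
        rw [← Function.iterate_succ_apply, ← Function.iterate_add_apply]
        congr 2
        omega
      simp
      rw [this]
      exact hk2'.trans_le (min_le_right _ _)

theorem exists_limit [CompactSpace M] {N : ℕ} (hN : 0 < N)
    (hfin : (chainRecurrentSet (⇑f)).Finite)
    (hper : ∀ p ∈ chainRecurrentSet (⇑f), f^[N] p = p) (x : M) :
    ∃ p ∈ chainRecurrentSet (⇑f), Tendsto (fun k => f^[N * k] x) atTop (𝓝 p) := by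
  set u : ℕ → M := fun k => f^[N * k] x with hu
  have hus : ∀ k, u (k + 1) = f^[N] (u k) := fun k => by
    simp only [hu]
    rw [← Function.iterate_add_apply]
    congr 2
    ring
  have hgc : Continuous f^[N] := f.continuous.iterate N
  obtain ⟨p, hp⟩ := exists_clusterPt_of_compactSpace (map u atTop)
  have hpR : p ∈ chainRecurrentSet (⇑f) := chainRecurrent_of_clusterPt hN hp
  refine ⟨p, hpR, ?_⟩
  -- a neighbourhood of `p` whose closure meets the chain recurrent set only in `p`
  have hiso : ∀ᶠ z in 𝓝 p, z ∉ chainRecurrentSet (⇑f) \ {p} :=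
    (hfin.subset Set.sdiff_subset).isClosed.isOpen_compl.mem_nhds (by simp)
  obtain ⟨ε0, hε0, hε0'⟩ := Metric.eventually_nhds_iff.1 hiso
  rw [Metric.tendsto_nhds]
  intro ε hε
  set r := min ε (ε0 / 2) with hr
  have hr0 : 0 < r := lt_min hε (half_pos hε0)
  have hnot : ¬ ∃ᶠ k in atTop, dist (u k) p < r ∧ ¬ dist (u (k + 1)) p < r := by
    intro hfr
    have hne : (atTop ⊓ 𝓟 {k | dist (u k) p < r ∧ ¬ dist (u (k + 1)) p < r}).NeBot :=
      frequently_iff_neBot.1 hfr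
    obtain ⟨z, hz⟩ := exists_clusterPt_of_compactSpace
      (map u (atTop ⊓ 𝓟 {k | dist (u k) p < r ∧ ¬ dist (u (k + 1)) p < r}))
    have hz' : MapClusterPt z (atTop ⊓ 𝓟 {k | dist (u k) p < r ∧ ¬ dist (u (k + 1)) p < r}) u := hz
    have hzR : z ∈ chainRecurrentSet (⇑f) :=
      chainRecurrent_of_clusterPt hN (hz.mono (map_mono inf_le_left))
    have hev : ∀ᶠ k in (atTop ⊓ 𝓟 {k | dist (u k) p < r ∧ ¬ dist (u (k + 1)) p < r}),
      dist (u k) p < r ∧ ¬ dist (u (k + 1)) p < r := eventually_inf_principal.2 (by simp)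
    have hzp : z = p := by
      by_contra hne
      have hd : ¬ dist z p < ε0 := fun h => hε0' h ⟨hzR, hne⟩
      have h1 : ∃ᶠ k in (atTop ⊓ 𝓟 {k | dist (u k) p < r ∧ ¬ dist (u (k + 1)) p < r}),
        dist (u k) z < ε0 / 2 := hz'.frequently (Metric.ball_mem_nhds z (half_pos hε0))
      obtain ⟨k, hk1, hk2, -⟩ := (h1.and_eventually hev).exists
      have h2 : dist (u k) p < ε0 / 2 := hk2.trans_le (min_le_right _ _)
      apply hd
      calc dist z p ≤ dist (u k) z + dist (u k) p := dist_triangle_left _ _ _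
        _ < ε0 := by linarith
    subst hzp
    have h1 : ∃ᶠ k in (atTop ⊓ 𝓟 {k | dist (u k) z < r ∧ ¬ dist (u (k + 1)) z < r}),
        dist (f^[N] (u k)) z < r := by
      apply hz'.frequently (p := fun y => dist (f^[N] y) z < r)
      have hc : ContinuousAt (fun y => dist (f^[N] y) z) z := by fun_prop
      refine hc.eventually_lt continuousAt_const ?_
      simpa [hper z hpR] using hr0
    obtain ⟨k, hk1, -, hk2⟩ := (h1.and_eventually hev).exists
    rw [hus] at hk2
    exact hk2 hk1
  rw [not_frequently] at hnot
  obtain ⟨k0, hk0⟩ := eventually_atTop.1 hnot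
  have hfr : ∃ᶠ k in atTop, dist (u k) p < r :=
    MapClusterPt.frequently hp (Metric.ball_mem_nhds p hr0)
  obtain ⟨k1, hk1, hk1'⟩ := (frequently_atTop.1 hfr) k0
  rw [eventually_atTop]
  refine ⟨k1, fun k hk => ?_⟩
  have : dist (u k) p < r := by
    induction k, hk using Nat.le_induction with
    | base => exact hk1'
    | succ k hk ih =>
      have := hk0 k (hk1.trans hk)
      by_contra h
      exact this ⟨ih, h⟩
  exact this.trans_le (min_le_left _ _)
end

/-- A manifold has a basis of open simply connected sets. -/
theorem IsChartedEuclidean.basis {n : ℕ} {M : Type*} [TopologicalSpace M]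
    (hM : IsChartedEuclidean n M) (x : M) (W : Set M) (hW : W ∈ 𝓝 x) :
    ∃ V, V ⊆ W ∧ x ∈ V ∧ IsOpen V ∧ IsSimplyConnected V := by
  obtain ⟨U, hU, hx, ⟨φ⟩⟩ := hM x
  have he : IsOpenEmbedding (fun v => (φ.symm v : M)) :=
    hU.isOpenEmbedding_subtypeVal.comp φ.symm.isOpenEmbedding
  have hφx : (fun v => (φ.symm v : M)) (φ ⟨x, hx⟩) = x := by simp
  have hpre : (fun v => (φ.symm v : M)) ⁻¹' W ∈ 𝓝 (φ ⟨x, hx⟩) :=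
    he.continuous.continuousAt (by simpa using hW)
  obtain ⟨ε, hε, hball⟩ := Metric.mem_nhds_iff.1 hpre
  refine ⟨(fun v => (φ.symm v : M)) '' Metric.ball (φ ⟨x, hx⟩) ε, ?_, ?_, ?_, ?_⟩
  · rintro _ ⟨v, hv, rfl⟩
    exact hball hv
  · exact ⟨φ ⟨x, hx⟩, Metric.mem_ball_self hε, hφx⟩
  · exact he.isOpenMap _ Metric.isOpen_ball
  · rw [he.isEmbedding.isSimplyConnected_image]
    have := (convex_ball (φ ⟨x, hx⟩) ε).contractibleSpace ⟨_, Metric.mem_ball_self hε⟩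
    exact SimplyConnectedSpace.ofContractible _

theorem IsChartedEuclidean.locallyPathConnected {n : ℕ} {M : Type*} [TopologicalSpace M]
    (hM : IsChartedEuclidean n M) : LocallyPathConnectedSpace M := by
  refine ⟨fun x => ⟨fun W => ⟨fun hW => ?_, ?_⟩⟩⟩
  · obtain ⟨V, h1, h2, h3, h4⟩ := hM.basis x W hW
    exact ⟨V, ⟨h3.mem_nhds h2, h4.isPathConnected⟩, h1⟩
  · rintro ⟨V, ⟨h1, -⟩, h2⟩
    exact mem_of_superset h1 h2

/-- The linear projection onto the first two coordinates has a section. -/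
theorem exists_proj {n : ℕ} (hn : 2 ≤ n) :
    ∃ (π : EuclideanSpace ℝ (Fin n) →L[ℝ] ℝ × ℝ) (σ : ℝ × ℝ →L[ℝ] EuclideanSpace ℝ (Fin n)),
      (∀ w, π (σ w) = w) ∧
      ∀ v : EuclideanSpace ℝ (Fin n), (∀ j : Fin n, (j : ℕ) < 2 → v j = 0) → π v = 0 := by
  refine ⟨(EuclideanSpace.proj (𝕜 := ℝ) (⟨0, by omega⟩ : Fin n)).prod
    (EuclideanSpace.proj (𝕜 := ℝ) (⟨1, by omega⟩ : Fin n)),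
    (ContinuousLinearMap.fst ℝ ℝ ℝ).smulRight (EuclideanSpace.single (⟨0, by omega⟩ : Fin n) 1) +
    (ContinuousLinearMap.snd ℝ ℝ ℝ).smulRight (EuclideanSpace.single (⟨1, by omega⟩ : Fin n) 1),
    ?_, ?_⟩
  · rintro ⟨a, b⟩
    ext <;> simp
  · intro v hv
    ext
    · simpa using hv ⟨0, by omega⟩ (by simp)
    · simpa using hv ⟨1, by omega⟩ (by simp)

/-- a closed connected topological `n`-manifold (`n ≥ 2`) admitting a
regular homeomorphism with no chain recurrent points of Morse index `1` or `n-1` is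
simply connected. -/
theorem regular_no_codim_one_simply_connected {n : ℕ} (hn : 2 ≤ n) {M : Type*}
    [MetricSpace M] [CompactSpace M] [ConnectedSpace M] [Nonempty M]
    (hM : IsChartedEuclidean n M)
    (f : M ≃ₜ M) (hf : RegularHomeo n f)
    (hind : ∀ p ∈ chainRecurrentSet (⇑f), ∀ i : ℕ,
      TopHyperbolic n f p i → i ≠ 1 ∧ i ≠ n - 1) :
    SimplyConnectedSpace M := by
  classical
  obtain ⟨hfin, hhyp⟩ := hf
  have : LocallyPathConnectedSpace M := hM.locallyPathConnected
  have : PathConnectedSpace M := pathConnectedSpace_iff_connectedSpace.2 inferInstance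
  have : Fintype (chainRecurrentSet (⇑f)) := hfin.fintype
  have hch : ∀ p : chainRecurrentSet (⇑f), ∃ i m δu δs e,
      HypChart n f (p : M) i m δu δs e ∧ (i = 0 ∨ 2 ≤ i) := by
    rintro ⟨p, hp⟩
    obtain ⟨i, -, hi⟩ := hhyp p hp
    obtain ⟨m, δu, δs, e, H⟩ := hi.exists_chart
    have := (hind p hp i hi).1
    exact ⟨i, m, δu, δs, e, H, by omega⟩
  choose i m δu δs e H hi using hch
  set N : ℕ := ∏ p, m p with hNdef
  have hN : 0 < N := Finset.prod_pos fun p _ => (H p).mpos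
  have hdvd : ∀ p, m p ∣ N := fun p => Finset.dvd_prod_of_mem m (Finset.mem_univ p)
  have hper : ∀ p ∈ chainRecurrentSet (⇑f), f^[N] p = p := fun p hp =>
    Function.IsPeriodicPt.trans_dvd (show Function.IsPeriodicPt (⇑f) (m ⟨p, hp⟩) p from
      (H ⟨p, hp⟩).per) (hdvd ⟨p, hp⟩)
  obtain ⟨π, σ, hπσ, hπ⟩ := exists_proj hn
  set B : Set M := ⋃ p, ⋃ (_ : i p = 0), Set.range (e p) with hBdef
  have hBopen : IsOpen B :=
    isOpen_iUnion fun p => isOpen_iUnion fun _ => (H p).emb.isOpen_range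
  have hcover : ∀ x : M, x ∈ B ∨ ∃ p, ∃ r : ℕ, x ∈ chartDisc (e p) π r := by
    intro x
    obtain ⟨p, hp, hlim⟩ := exists_limit hN hfin hper x
    obtain ⟨v, hv, hv0⟩ := (H ⟨p, hp⟩).stable hN (hdvd _) hlim
    rcases hi ⟨p, hp⟩ with h0 | h2
    · left
      simp only [hBdef, Set.mem_iUnion]
      exact ⟨⟨p, hp⟩, h0, v, hv⟩
    · right
      obtain ⟨r, hr⟩ := exists_nat_ge ‖v‖
      exact ⟨⟨p, hp⟩, r, v, ⟨hπ v fun j hj => hv0 j (by omega), hr⟩, hv⟩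
  have hres : ∀ᶠ γ in residual C(unitInterval, M),
      ∀ p, ∀ r : ℕ, ∀ t, γ t ∉ chartDisc (e p) π r :=
    eventually_countable_forall.2 fun p => eventually_countable_forall.2 fun r =>
      residual_avoid (H p).emb π σ hπσ r
  have hd : Dense {γ : C(unitInterval, M) | ∀ t, γ t ∈ B} := by
    refine (dense_of_mem_residual hres).mono fun γ hγ t => ?_
    rcases hcover (γ t) with h | ⟨p, r, h⟩
    · exact h
    · exact absurd h (hγ p r t)
  have hBpc : IsPathConnected B := by
    have := isPathConnected_inter hBopen hd isOpen_univ isPathConnected_univ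
    rwa [Set.univ_inter] at this
  obtain ⟨b, hb⟩ := hBpc.nonempty
  obtain ⟨p, hp0, hbp⟩ : ∃ p, i p = 0 ∧ b ∈ Set.range (e p) := by
    simpa only [hBdef, Set.mem_iUnion, exists_prop] using hb
  have hsub : Set.range (e p) ⊆ B := by
    intro x hx
    simp only [hBdef, Set.mem_iUnion, exists_prop]
    exact ⟨p, hp0, hx⟩
  have hBeq : B = Set.range (e p) := by
    refine Set.Subset.antisymm ?_ hsub
    refine IsPreconnected.subset_left_of_subset_union (H p).emb.isOpen_range
      (v := ⋃ q, ⋃ (_ : i q = 0 ∧ q ≠ p), Set.range (e q))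
      (isOpen_iUnion fun q => isOpen_iUnion fun _ => (H q).emb.isOpen_range) ?_ ?_ ⟨b, hb, hbp⟩
      hBpc.isConnected.isPreconnected
    · rw [Set.disjoint_left]
      intro x hx hx'
      simp only [Set.mem_iUnion, exists_prop] at hx'
      obtain ⟨q, ⟨hq0, hqp⟩, hxq⟩ := hx'
      have Hq := H q
      have Hp := H p
      rw [hq0] at Hq
      rw [hp0] at Hp
      exact hqp (Subtype.ext (sink_unique Hq Hp hxq hx))
    · intro x hx
      simp only [hBdef, Set.mem_iUnion, exists_prop] at hx
      obtain ⟨q, hq0, hxq⟩ := hx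
      by_cases hqp : q = p
      · left
        rwa [← hqp]
      · right
        simp only [Set.mem_iUnion, exists_prop]
        exact ⟨q, ⟨hq0, hqp⟩, hxq⟩
  have hBsc : IsSimplyConnected B := by
    rw [hBeq, ← Set.image_univ, (H p).emb.isEmbedding.isSimplyConnected_image]
    have := (convex_univ (𝕜 := ℝ) (E := EuclideanSpace ℝ (Fin n))).contractibleSpace ⟨0, trivial⟩
    exact SimplyConnectedSpace.ofContractible _
  refine simplyConnected_of_good hBsc fun x W hW => ?_
  obtain ⟨V, h1, h2, h3, h4⟩ := hM.basis x W hW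
  exact ⟨V, h1, h2, h3, h4, isPathConnected_inter hBopen hd h3 h4.isPathConnected⟩
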